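/- arXiv:1901.06547 — 5 statements merged into one kernel-verified Lean document; each statement's English description precedes it below -/
import Mathlib

section
/- Let X be a partial order, s : Finset X, and U : Set X. Then the following are equivalent: (1) there exists t : Finset X with ↑t ⊆ U and lowerClosure ↑t = lowerClosure ↑s; (2) every maximal element of the lower set lowerClosure ↑s belongs to U (x is maximal in a lower set l if x ∈ l and no y ∈ l satisfies x < y). In particular, the set of maximal elements of lowerClosure ↑s is finite, generates lowerClosure ↑s (its lower closure equals lowerClosure ↑s), and is the least subset of X containing a finite generating set of lowerClosure ↑s. -/
/-!
A maximal element `x` of `lowerClosure t` lies below some `a ∈ t`, and `a` is itself in the lower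
closure, so `x = a`: every generating set contains all maximal elements
(`maximals_subset_of_generates`). Applied to the finite set `s`, this makes the set of maximal
elements finite. Conversely, each element of `lowerClosure s` lies below an element of `s`, which,
`s` being finite, lies below a maximal element of `s`; that element is maximal in `lowerClosure s`
as well. Hence the maximal elements generate (`lowerClosure_maximals`).
-/

theorem maximals_subset_of_generates {X : Type*} [PartialOrder X] {t : Set X} {l : LowerSet X}
    (ht : lowerClosure t = l) : {x : X | x ∈ l ∧ ∀ y ∈ l, ¬ x < y} ⊆ t := by
  subst ht
  rintro x ⟨hx, hmax⟩
  obtain ⟨a, ha, hxa⟩ := mem_lowerClosure.1 hx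
  rcases hxa.eq_or_lt with rfl | hlt
  · exact ha
  · exact absurd hlt (hmax a (subset_lowerClosure ha))

theorem lowerClosure_maximals {X : Type*} [PartialOrder X] (s : Finset X) :
    lowerClosure {x : X | x ∈ lowerClosure (↑s : Set X) ∧
      ∀ y ∈ lowerClosure (↑s : Set X), ¬ x < y} = lowerClosure (↑s : Set X) := by
  apply le_antisymm
  · exact lowerClosure_min (fun x hx => hx.1) (lowerClosure (↑s : Set X)).lower
  · refine lowerClosure_min (fun a ha => ?_) (LowerSet.lower _)
    obtain ⟨m, ham, hm⟩ := s.exists_le_maximal (Finset.mem_coe.1 ha)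
    refine mem_lowerClosure.2 ⟨m, ⟨subset_lowerClosure hm.prop, fun y hy hmy => ?_⟩, ham⟩
    obtain ⟨b, hb, hyb⟩ := mem_lowerClosure.1 hy
    exact hm.not_gt hb (hmy.trans_le hyb)

/-- For a finite set `s` in a poset `X`, a subset `U` of `X` contains a finite
generating set of `lowerClosure ↑s` iff `U` contains every maximal element of
the lower set `lowerClosure ↑s`. Moreover the set of maximal elements of
`lowerClosure ↑s` is finite, generates `lowerClosure ↑s`, and is the least
subset of `X` containing a finite generating set of `lowerClosure ↑s`. -/
theorem base_of_finitely_generated_lowerset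
    {X : Type*} [PartialOrder X] (s : Finset X) (U : Set X) :
    ((∃ t : Finset X, ↑t ⊆ U ∧ lowerClosure (↑t : Set X) = lowerClosure (↑s : Set X)) ↔
      (∀ x : X, (x ∈ lowerClosure (↑s : Set X) ∧
        ∀ y ∈ lowerClosure (↑s : Set X), ¬ x < y) → x ∈ U)) ∧
    ({x : X | x ∈ lowerClosure (↑s : Set X) ∧
        ∀ y ∈ lowerClosure (↑s : Set X), ¬ x < y}.Finite) ∧
    (lowerClosure {x : X | x ∈ lowerClosure (↑s : Set X) ∧
        ∀ y ∈ lowerClosure (↑s : Set X), ¬ x < y} = lowerClosure (↑s : Set X)) ∧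
    (∀ V : Set X,
      (∃ t : Finset X, ↑t ⊆ V ∧ lowerClosure (↑t : Set X) = lowerClosure (↑s : Set X)) →
      {x : X | x ∈ lowerClosure (↑s : Set X) ∧
        ∀ y ∈ lowerClosure (↑s : Set X), ¬ x < y} ⊆ V) := by
  have hfin : {x : X | x ∈ lowerClosure (↑s : Set X) ∧
      ∀ y ∈ lowerClosure (↑s : Set X), ¬ x < y}.Finite :=
    s.finite_toSet.subset (maximals_subset_of_generates rfl)
  refine ⟨⟨?_, fun h => ⟨hfin.toFinset, ?_, ?_⟩⟩, hfin, lowerClosure_maximals s, ?_⟩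
  · rintro ⟨t, htU, ht⟩ x hx
    exact htU (maximals_subset_of_generates ht hx)
  · rw [hfin.coe_toFinset]
    exact fun x hx => h x hx
  · rw [hfin.coe_toFinset]
    exact lowerClosure_maximals s
  · rintro V ⟨t, htV, ht⟩
    exact (maximals_subset_of_generates ht).trans htV
end

section
/- Let X be a partial order and A B : Set X. Let a be a lower set of the subposet ↥A and b a lower set of the subposet ↥B, both finitely generated (each equal to the lower closure of a finite set in the respective subposet), such that lowerClosure (Subtype.val '' ↑a) = lowerClosure (Subtype.val '' ↑b) holds in X. Then there exists a unique lower set c of the subposet ↥(A ∩ B) such that the lower closure in ↥A of the image of c under the inclusion ↥(A ∩ B) → ↥A equals a, and the lower closure in ↥B of the image of c under the inclusion ↥(A ∩ B) → ↥B equals b; moreover this c is finitely generated. -/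
/-!
Let `D` be the common lower closure of `a` and `b` in `X`. Since `A` and `B` carry the induced
order, `a = A ∩ D` and `b = B ∩ D`, and any solution `c` must be `(A ∩ B) ∩ D`, which gives
uniqueness. For existence, `D` is generated by a finite subset `S` of `A` and also by a finite
subset `T` of `B`. As `S` is finite, every element of `D` lies below a maximal element of `D`, and
by antisymmetry a maximal element of `D` belongs to every generating set. Hence every element of `D`
lies below an element of `S ∩ T ⊆ A ∩ B` (`exists_le_mem_inter`), so `D` is generated by its trace
on `A ∩ B`, and that trace is generated by the finite set of points of `S` in `A ∩ B`.
-/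

/-- Holds because a maximal element of `S` is maximal in the common lower closure, hence lies in
`T` too. -/
lemma exists_le_mem_inter {X : Type*} [PartialOrder X] {S T : Set X} (hS : S.Finite)
    (h : lowerClosure S = lowerClosure T) {x : X} (hx : x ∈ lowerClosure S) :
    ∃ m ∈ S ∩ T, x ≤ m := by
  obtain ⟨y, hy, hxy⟩ := mem_lowerClosure.1 hx
  obtain ⟨m, hym, hm⟩ := hS.exists_le_maximal hy
  refine ⟨m, ⟨hm.prop, ?_⟩, hxy.trans hym⟩
  have hmT : m ∈ lowerClosure T := h ▸ subset_lowerClosure hm.prop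
  obtain ⟨t, ht, hmt⟩ := mem_lowerClosure.1 hmT
  have htS : t ∈ lowerClosure S := h ▸ subset_lowerClosure ht
  obtain ⟨s, hs, hts⟩ := mem_lowerClosure.1 htS
  have hmt' : m = t := le_antisymm hmt (hts.trans (hm.2 hs (hmt.trans hts)))
  exact hmt' ▸ ht

/-- Along an order-reflecting map, a lower set is the preimage of the lower set its image
generates. -/
lemma mem_lowerClosure_image_iff {P Q : Type*} [Preorder P] [Preorder Q] (f : P → Q)
    (hf : ∀ x y, f x ≤ f y → x ≤ y) (a : LowerSet P) (x : P) :
    f x ∈ lowerClosure (f '' (a : Set P)) ↔ x ∈ a := by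
  refine ⟨fun h => ?_, fun h => subset_lowerClosure ⟨x, h, rfl⟩⟩
  obtain ⟨_, ⟨y, hy, rfl⟩, hxy⟩ := mem_lowerClosure.1 h
  exact a.lower (hf _ _ hxy) hy

lemma lowerClosure_image_lowerClosure {P Q : Type*} [Preorder P] [Preorder Q] {f : P → Q}
    (hf : Monotone f) (s : Set P) :
    lowerClosure (f '' (lowerClosure s : Set P)) = lowerClosure (f '' s) := by
  apply le_antisymm
  · refine lowerClosure_le.2 ?_
    rintro _ ⟨x, hx, rfl⟩
    obtain ⟨y, hy, hxy⟩ := mem_lowerClosure.1 hx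
    exact mem_lowerClosure.2 ⟨f y, ⟨y, hy, rfl⟩, hf hxy⟩
  · exact lowerClosure_mono (Set.image_mono subset_lowerClosure)

/-- The finitary lowerset functor preserves finite intersections of
order-embeddings: given subsets `A B` of a poset `X` and finitely generated
lower sets `a` of `↥A` and `b` of `↥B` whose images in `X` have the same lower
closure, there is a unique lower set `c` of `↥(A ∩ B)` whose images generate
`a` and `b` respectively, and this `c` is finitely generated. -/
theorem finitary_lowerset_preserves_finite_intersections
    {X : Type*} [PartialOrder X] (A B : Set X)
    (a : LowerSet ↥A) (b : LowerSet ↥B)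
    (ha : ∃ s : Finset ↥A, a = lowerClosure (↑s : Set ↥A))
    (hb : ∃ s : Finset ↥B, b = lowerClosure (↑s : Set ↥B))
    (hab : lowerClosure (Subtype.val '' (↑a : Set ↥A)) =
           lowerClosure (Subtype.val '' (↑b : Set ↥B))) :
    ∃ c : LowerSet ↥(A ∩ B),
      (lowerClosure (Set.inclusion (Set.inter_subset_left : A ∩ B ⊆ A) ''
          (↑c : Set ↥(A ∩ B))) = a ∧
       lowerClosure (Set.inclusion (Set.inter_subset_right : A ∩ B ⊆ B) ''
          (↑c : Set ↥(A ∩ B))) = b ∧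
       ∃ s : Finset ↥(A ∩ B), c = lowerClosure (↑s : Set ↥(A ∩ B))) ∧
      ∀ c' : LowerSet ↥(A ∩ B),
        (lowerClosure (Set.inclusion (Set.inter_subset_left : A ∩ B ⊆ A) ''
            (↑c' : Set ↥(A ∩ B))) = a ∧
         lowerClosure (Set.inclusion (Set.inter_subset_right : A ∩ B ⊆ B) ''
            (↑c' : Set ↥(A ∩ B))) = b) → c' = c := by
  have memA := mem_lowerClosure_image_iff (Subtype.val : ↥A → X) (fun _ _ h => h) a
  have memB := mem_lowerClosure_image_iff (Subtype.val : ↥B → X) (fun _ _ h => h) b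
  rw [← hab] at memB
  obtain ⟨s, hs⟩ := ha
  obtain ⟨t, ht⟩ := hb
  have hDS : lowerClosure (Subtype.val '' (a : Set ↥A)) =
      lowerClosure (Subtype.val '' (s : Set ↥A)) := by
    rw [hs, lowerClosure_image_lowerClosure (Subtype.mono_coe _)]
  have hDT : lowerClosure (Subtype.val '' (b : Set ↥B)) =
      lowerClosure (Subtype.val '' (t : Set ↥B)) := by
    rw [ht, lowerClosure_image_lowerClosure (Subtype.mono_coe _)]
  generalize lowerClosure (Subtype.val '' (a : Set ↥A)) = D at *
  have hfin : (Subtype.val '' (s : Set ↥A)).Finite := s.finite_toSet.image _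
  have key : ∀ x ∈ D, ∃ m : ↥(A ∩ B), m.1 ∈ Subtype.val '' (s : Set ↥A) ∧ m.1 ∈ D ∧ x ≤ m.1 := by
    intro x hx
    obtain ⟨m, ⟨hmS, hmT⟩, hxm⟩ :=
      exists_le_mem_inter hfin (hDS.symm.trans (hab.trans hDT)) (hDS ▸ hx)
    have hmD : m ∈ D := hDS ▸ subset_lowerClosure hmS
    refine ⟨⟨m, ?_, ?_⟩, hmS, hmD, hxm⟩
    · obtain ⟨y, -, rfl⟩ := hmS
      exact y.2
    · obtain ⟨y, -, rfl⟩ := hmT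
      exact y.2
  refine ⟨⟨{x | x.1 ∈ D}, fun x y hyx hx => D.lower hyx hx⟩, ⟨?_, ?_, ?_⟩, ?_⟩
  · ext x
    refine Iff.trans ?_ (memA x)
    refine ⟨fun h => ?_, fun h => ?_⟩
    · obtain ⟨_, ⟨y, hy, rfl⟩, hxy⟩ := mem_lowerClosure.1 h
      exact D.lower hxy hy
    · obtain ⟨m, -, hmD, hxm⟩ := key x h
      exact mem_lowerClosure.2 ⟨_, ⟨m, hmD, rfl⟩, hxm⟩
  · ext x
    refine Iff.trans ?_ (memB x)
    refine ⟨fun h => ?_, fun h => ?_⟩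
    · obtain ⟨_, ⟨y, hy, rfl⟩, hxy⟩ := mem_lowerClosure.1 h
      exact D.lower hxy hy
    · obtain ⟨m, -, hmD, hxm⟩ := key x h
      exact mem_lowerClosure.2 ⟨_, ⟨m, hmD, rfl⟩, hxm⟩
  · have hfin' := hfin.preimage (Subtype.val_injective (p := (· ∈ A ∩ B))).injOn
    refine ⟨hfin'.toFinset, ?_⟩
    rw [hfin'.coe_toFinset]
    ext x
    refine ⟨fun h => ?_, fun h => ?_⟩
    · obtain ⟨m, hmS, -, hxm⟩ := key x h
      exact mem_lowerClosure.2 ⟨m, hmS, hxm⟩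
    · obtain ⟨m, hm, hxm⟩ := mem_lowerClosure.1 h
      have hmD : m.1 ∈ D := hDS ▸ subset_lowerClosure hm
      exact D.lower hxm hmD
  · rintro c' ⟨h, -⟩
    ext x
    have hx := mem_lowerClosure_image_iff
      (Set.inclusion (Set.inter_subset_left : A ∩ B ⊆ A)) (fun _ _ h => h) c' x
    rw [h] at hx
    exact hx.symm.trans (memA _).symm
end

section
/- Let X, Y, Z be partial orders. For a relation R : Y → X → Prop define its lowerset lifting L R by: for o : LowerSet Y and l : LowerSet X, L R o l ⟺ ∀ y ∈ o, ∃ x ∈ l, R y x. Then: (identities) taking R to be the order relation (R y x ⟺ y ≤ x), one has L R o l ⟺ o ≤ l for all o l : LowerSet X; (composition) if R : Y → X → Prop and S : Z → Y → Prop are monotone relations (R y x, y' ≤ y, x ≤ x' imply R y' x'; and S z y, z' ≤ z, y ≤ y' imply S z' y'), then for the composite relation (S ∘ R) z x ⟺ ∃ y, S z y ∧ R y x one has, for all p : LowerSet Z and l : LowerSet X: L (S ∘ R) p l ⟺ ∃ o : LowerSet Y, L S p o ∧ L R o l. -/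
/-!
For identities, a lower set contains everything below one of its members. For composition,
a pair `(p, l)` related by the lifted composite is interpolated by the `R`-preimage of `l`,
`{y | ∃ x ∈ l, R y x}`, which is a lower set because `R` is monotone; the converse just
composes witnesses.
-/

/-- Functoriality of the relation lifting for the lowerset functor: the
lifting `L R o l ⟺ ∀ y ∈ o, ∃ x ∈ l, R y x` sends the order relation to the
order relation (identities), and sends composites of monotone relations to
composites of the liftings. -/
theorem lowerset_relation_lifting_functorial
    {X Y Z : Type*} [PartialOrder X] [PartialOrder Y] [PartialOrder Z]
    (R : Y → X → Prop) (S : Z → Y → Prop)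
    (hR : ∀ ⦃y x y' x'⦄, R y x → y' ≤ y → x ≤ x' → R y' x')
    (hS : ∀ ⦃z y z' y'⦄, S z y → z' ≤ z → y ≤ y' → S z' y') :
    (∀ o l : LowerSet X, (∀ y ∈ o, ∃ x ∈ l, y ≤ x) ↔ o ≤ l) ∧
    (∀ (p : LowerSet Z) (l : LowerSet X),
      (∀ z ∈ p, ∃ x ∈ l, ∃ y : Y, S z y ∧ R y x) ↔
      ∃ o : LowerSet Y, (∀ z ∈ p, ∃ y ∈ o, S z y) ∧ (∀ y ∈ o, ∃ x ∈ l, R y x)) := by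
  refine ⟨fun o l => ⟨fun h y hy => ?_, fun h y hy => ⟨y, h hy, le_rfl⟩⟩,
    fun p l => ⟨fun h => ?_, ?_⟩⟩
  · obtain ⟨x, hx, hyx⟩ := h y hy
    exact l.lower hyx hx
  · -- The interpolant is the largest `o` with `L R o l`, the `R`-preimage of `l`;
    -- monotonicity of `R` in its first argument makes it a lower set.
    refine ⟨⟨{y | ∃ x ∈ l, R y x}, ?_⟩, fun z hz => ?_, fun y hy => hy⟩
    · rintro y y' hle ⟨x, hx, hyx⟩
      exact ⟨x, hx, hR hyx hle le_rfl⟩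
    · obtain ⟨x, hx, y, hzy, hyx⟩ := h z hz
      exact ⟨y, ⟨x, hx, hyx⟩, hzy⟩
  · rintro ⟨o, hpo, hol⟩ z hz
    obtain ⟨y, hy, hzy⟩ := hpo z hz
    obtain ⟨x, hx, hyx⟩ := hol y hy
    exact ⟨x, hx, y, hzy, hyx⟩
end

section
/- Let A, X, Y be partial orders and let c : X →o A × X and d : Y →o A × Y be monotone maps (coalgebras for the functor A × Id). Define the behaviour streams beh_c : X → ℕ → A by beh_c x 0 = (c x).1 and beh_c x (n+1) = beh_c ((c x).2) n, and similarly beh_d for d. Then for all x₀ : X and y₀ : Y the following are equivalent: (1) there exists a relation S : X → Y → Prop such that (monotonicity) S x y, x' ≤ x and y ≤ y' imply S x' y'; S x₀ y₀ holds; and for all x y, S x y implies (c x).1 ≤ (d y).1 and S ((c x).2) ((d y).2); (2) for every n : ℕ, beh_c x₀ n ≤ beh_d y₀ n. -/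
/-!
A simulation passes to successor states, so induction on the position shows that related
states have pointwise ordered streams. Conversely, the pointwise order of behaviours is
itself a simulation: its closure under the state orders is monotonicity of the
behaviour map (`beh_mono`), and the step condition splits a stream into head and tail.
-/

/-- The behaviour stream of a state of a coalgebra `c : X →o A × X` for the
poset functor `A × Id`. -/
def beh {A X : Type*} [PartialOrder A] [PartialOrder X]
    (c : X →o A × X) : X → ℕ → A
  | x, 0 => (c x).1
  | x, n + 1 => beh c (c x).2 n

/-- The behaviour map is monotone in the state; this makes the pointwise order of
behaviours a relation closed downwards on the left and upwards on the right. -/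
theorem beh_mono {A X : Type*} [PartialOrder A] [PartialOrder X] (c : X →o A × X)
    (n : ℕ) : ∀ ⦃x x' : X⦄, x ≤ x' → beh c x n ≤ beh c x' n := by
  induction n with
  | zero => exact fun x x' h => (c.monotone h).1
  | succ n ih => exact fun x x' h => ih (c.monotone h).2

/-- For coalgebras of the poset functor `A × Id` (with no atoms), similarity
given by relation lifting coincides with pointwise order of behaviour
streams: there is a simulation relating `x₀` to `y₀` iff the behaviour stream
of `x₀` is pointwise below the behaviour stream of `y₀`. -/
theorem stream_simulation_iff_pointwise_le
    {A X Y : Type*} [PartialOrder A] [PartialOrder X] [PartialOrder Y]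
    (c : X →o A × X) (d : Y →o A × Y) :
    ∀ (x₀ : X) (y₀ : Y),
      (∃ S : X → Y → Prop,
        (∀ ⦃x y x' y'⦄, S x y → x' ≤ x → y ≤ y' → S x' y') ∧
        S x₀ y₀ ∧
        (∀ x y, S x y → (c x).1 ≤ (d y).1 ∧ S (c x).2 (d y).2)) ↔
      ∀ n : ℕ, beh c x₀ n ≤ beh d y₀ n := by
  intro x₀ y₀
  constructor
  · rintro ⟨S, -, h₀, hS⟩ n
    induction n generalizing x₀ y₀ with
    | zero => exact (hS _ _ h₀).1
    | succ n ih => exact ih _ _ (hS _ _ h₀).2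
  · intro h
    -- The pointwise order of behaviours is itself a simulation (the largest one).
    refine ⟨fun x y => ∀ n, beh c x n ≤ beh d y n, ?_, h, ?_⟩
    · intro x y x' y' hxy hx hy n
      exact (beh_mono c n hx).trans ((hxy n).trans (beh_mono d n hy))
    · exact fun x y hxy => ⟨hxy 0, fun n => hxy (n + 1)⟩
end

section
/- Let Z be a partial order. The following are equivalent: (1) Z is finite; (2) for every partial order X, every nonempty index type ι, every family S : ι → Set X that is directed under inclusion (for all i j there is k with S i ⊆ S k and S j ⊆ S k) and satisfies ⋃ i, S i = Set.univ, and every monotone map f : Z →o X, there exists i : ι with Set.range f ⊆ S i. -/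
/-!
A finite range is contained in one member of a directed cover. Conversely, let `e : ℕ ↪ Z` be a
sequence of distinct points of an infinite poset `Z`. The map `z ↦ {n | e n ≤ z}` into `Set ℕ` is
monotone and injective on the points `e n`, so its range lies in no finite subset, although the
finite subsets form a directed cover of `Set ℕ`. Using `Set ℕ` as the target, and not `Z` itself,
allows the test posets to live in a universe unrelated to that of `Z`.
-/

universe u v

/-- A poset `Z` is an `ℵ₀`-bounded object of the category of posets iff it is
finite: `Z` is finite iff for every poset `X` presented as the union of a
directed family of subsets and every monotone map `f : Z →o X`, the range of
`f` lands in one member of the family. -/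
theorem finite_iff_aleph0_bounded
    {Z : Type u} [PartialOrder Z] :
    Finite Z ↔
      ∀ (X : Type v) [PartialOrder X] (ι : Type v) [Nonempty ι] (S : ι → Set X),
        (∀ i j : ι, ∃ k : ι, S i ⊆ S k ∧ S j ⊆ S k) →
        (⋃ i, S i) = Set.univ →
        ∀ f : Z →o X, ∃ i : ι, Set.range f ⊆ S i := by
  constructor
  · intro _ X _ ι _ S hdir hcov f
    have hd : Directed (· ⊆ ·) S := hdir
    have hfin : (Set.range f).Finite := Set.finite_range f
    obtain ⟨i, hi⟩ := hd.exists_mem_subset_of_finset_subset_biUnion (s := hfin.toFinset)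
      (by simp [hcov])
    exact ⟨i, by simpa only [Set.Finite.coe_toFinset] using hi⟩
  · intro h
    by_contra hZ
    have : Infinite Z := not_finite_iff_infinite.mp hZ
    let e : ℕ ↪ Z := Infinite.natEmbedding Z
    let f : Z →o ULift.{v} (Set ℕ) :=
      { toFun := fun z => ⟨{n | e n ≤ z}⟩
        monotone' := fun _ _ hab _ hn => le_trans hn hab }
    obtain ⟨F, hF⟩ := h (ULift.{v} (Set ℕ)) (Finset (ULift.{v} (Set ℕ)))
      (fun F => (F : Set (ULift.{v} (Set ℕ))))
      (fun F G => by
        classical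
        exact ⟨F ∪ G, by simp, by simp⟩)
      (Set.eq_univ_of_forall fun x => Set.mem_iUnion.mpr ⟨{x}, by simp⟩) f
    -- `f` separates the points `e n`, by antisymmetry, so its range is infinite.
    have hinj : Function.Injective fun n => f (e n) := by
      intro m n hmn
      have hset : {k | e k ≤ e m} = {k | e k ≤ e n} := congrArg ULift.down hmn
      have hle : e m ≤ e n := (Set.ext_iff.mp hset m).mp (le_refl (e m))
      have hge : e n ≤ e m := (Set.ext_iff.mp hset n).mpr (le_refl (e n))
      exact e.injective (le_antisymm hle hge)
    refine Set.infinite_range_of_injective hinj (F.finite_toSet.subset ?_)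
    rintro _ ⟨n, rfl⟩
    exact hF ⟨e n, rfl⟩
end
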